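/- arXiv:1912.13342 — 4 statements merged into one kernel-verified Lean document; each statement's English description precedes it below -/
import Mathlib

section
/- Let α > −1 and p ∈ [1, ∞). There is a constant c(α, p) > 0 such that for every n ≥ 2 and every polynomial P of degree at most n, ∫₀¹ t^α |P(t)|^p dt ≥ c(α, p) · |P(0)|^p · n^{−(2 + 2α)}. -/
open Polynomial Real

lemma aux_sinh (θ : ℝ) (hθ : 0 ≤ θ) (k : ℕ) :
    Real.sinh (k * θ) ≤ k * (Real.sinh θ * Real.cosh (k * θ)) := by
  induction k with
  | zero => simp
  | succ k ih =>
    have h1 : ((k + 1 : ℕ) : ℝ) * θ = k * θ + θ := by push_cast; ring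
    rw [h1, Real.sinh_add, Real.cosh_add]
    have s1 : 0 ≤ Real.sinh θ := Real.sinh_nonneg_iff.2 hθ
    have s2 : 0 ≤ Real.sinh (k * θ) := Real.sinh_nonneg_iff.2 (by positivity)
    have c1 := Real.one_le_cosh θ
    have c2 := Real.one_le_cosh (k * θ)
    have e1 : Real.cosh (k * θ) ≤ Real.cosh (k * θ) * Real.cosh θ + Real.sinh (k * θ) * Real.sinh θ := by
      nlinarith [mul_nonneg s2 s1]
    have e2 := mul_le_mul_of_nonneg_right ih (by linarith : 0 ≤ Real.cosh θ)
    have e3 := mul_le_mul_of_nonneg_right e1 s1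
    have e4 : 0 ≤ (k : ℝ) * (Real.sinh θ * (Real.sinh (k * θ) * Real.sinh θ)) := by positivity
    push_cast
    nlinarith

/-- The derivative of `T_{4n}` slightly outside of `[-1,1]` is of the order `n^2`. -/
lemma aux_T (n : ℕ) (hn : 2 ≤ n) (x : ℝ) (hx : 1 < x) (hx2 : x ≤ 1 + 8 / 3 / (n : ℝ) ^ 2) :
    (derivative (Chebyshev.T ℝ ((4 * n : ℕ) : ℤ))).eval x ≤ 16 * (n : ℝ) ^ 2 * Real.cosh 10 := by
  have hn0 : (0 : ℝ) < n := by positivity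
  set θ := Real.arcosh x with hθd
  have hθ0 : 0 ≤ θ := Real.arcosh_nonneg hx.le
  have hc : Real.cosh θ = x := Real.cosh_arcosh hx.le
  have hθ : 0 < θ := by
    rcases hθ0.lt_or_eq with h | h
    · exact h
    · rw [← h] at hc; simp at hc; linarith
  have hs : 0 < Real.sinh θ := Real.sinh_pos_iff.2 hθ
  have hb : (n : ℝ) * θ ≤ 5 / 2 := by
    have h1 : Real.cosh θ = 1 + 2 * Real.sinh (θ / 2) ^ 2 := by
      have := Real.cosh_two_mul (θ / 2)
      rw [Real.cosh_sq, show 2 * (θ / 2) = θ by ring] at this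
      linarith
    have h2 : θ / 2 ≤ Real.sinh (θ / 2) := Real.self_le_sinh_iff.2 (by linarith)
    have h3 : θ ^ 2 ≤ 16 / 3 / (n : ℝ) ^ 2 := by
      have : (θ / 2) ^ 2 ≤ Real.sinh (θ / 2) ^ 2 := by gcongr
      have e : 16 / 3 / (n : ℝ) ^ 2 = 2 * (8 / 3 / (n : ℝ) ^ 2) := by ring
      rw [e]; nlinarith
    have h4 : ((n : ℝ) * θ) ^ 2 ≤ 16 / 3 := by
      rw [le_div_iff₀ (by positivity)] at h3
      nlinarith
    nlinarith [mul_nonneg hn0.le hθ0]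
  rw [Chebyshev.T_derivative_eq_U]
  have hU := Chebyshev.U_real_cosh θ (((4 * n : ℕ) : ℤ) - 1)
  rw [hc] at hU
  have hU2 : (Chebyshev.U ℝ (((4 * n : ℕ) : ℤ) - 1)).eval x ≤ (4 * n : ℕ) * Real.cosh ((4 * n : ℕ) * θ) := by
    refine le_of_mul_le_mul_right ?_ hs
    rw [hU]
    have := aux_sinh θ hθ0 (4 * n)
    push_cast at this ⊢
    ring_nf at this ⊢
    linarith
  have hco : Real.cosh ((4 * n : ℕ) * θ) ≤ Real.cosh 10 := by
    rw [Real.cosh_le_cosh, abs_of_nonneg (by positivity), abs_of_nonneg (by norm_num)]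
    push_cast; nlinarith
  simp only [eval_mul, eval_intCast]
  have : (Chebyshev.U ℝ (((4 * n : ℕ) : ℤ) - 1)).eval x ≤ (4 * n : ℕ) * Real.cosh 10 :=
    hU2.trans (by gcongr)
  have h5 := mul_le_mul_of_nonneg_left this (by positivity : (0:ℝ) ≤ ((4 * n : ℕ) : ℝ))
  push_cast at h5 ⊢
  nlinarith

/-- Derivative at `0` of a polynomial bounded on `[1/n^2, 1]`. -/
lemma aux_markov (n : ℕ) (hn : 2 ≤ n) (F : ℝ[X]) (hF : F.natDegree ≤ 4 * n) (B : ℝ) (hB : 0 < B)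
    (hFB : ∀ t ∈ Set.Icc (1 / (n : ℝ) ^ 2) 1, |F.eval t| ≤ B) :
    |(derivative F).eval 0| ≤ 16 * (n : ℝ) ^ 2 * Real.cosh 10 * B * 3 := by
  wlog hpos : 0 ≤ (derivative F).eval 0 generalizing F
  · have := this (-F) (by simpa using hF) (by simpa using hFB) (by simp; linarith)
    simpa using this
  rw [abs_of_nonneg hpos]
  have hn0 : (0 : ℝ) < n := by positivity
  have hn2 : (2 : ℝ) ≤ n := by exact_mod_cast hn
  set δ : ℝ := 1 / (n : ℝ) ^ 2 with hδ
  have hδ0 : 0 < δ := by positivity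
  have hδ4 : δ ≤ 1 / 4 := by
    rw [hδ]; apply one_div_le_one_div_of_le (by norm_num); nlinarith
  set b : ℝ := (1 - δ) / 2 with hb
  set a : ℝ := (1 + δ) / 2 with ha
  have hb0 : 0 < b := by rw [hb]; linarith
  set Q : ℝ[X] := C (-B⁻¹) * F.comp (C a - C b * X) with hQ
  have hQdeg : Q.degree ≤ ((4 * n : ℕ) : WithBot ℕ) := by
    apply degree_le_of_natDegree_le
    refine (natDegree_C_mul_le _ _).trans (natDegree_comp_le.trans ?_)
    have : (C a - C b * X : ℝ[X]).natDegree ≤ 1 := by compute_degree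
    nlinarith
  have hQb : ∀ x ∈ Set.Icc (-1 : ℝ) 1, |Q.eval x| ≤ 1 := by
    intro x hx
    have := hFB (a - b * x) ⟨by rw [ha, hb]; nlinarith [hx.1, hx.2], by rw [ha, hb]; nlinarith [hx.1, hx.2]⟩
    simp only [hQ, eval_mul, eval_C, eval_comp, eval_sub, eval_X, abs_mul, abs_neg, abs_inv, abs_of_pos hB]
    rw [inv_mul_le_iff₀ hB]; linarith
  have hx1 : 1 < a / b := by rw [lt_div_iff₀ hb0]; linarith
  have hx2 : a / b ≤ 1 + 8 / 3 / (n : ℝ) ^ 2 := by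
    have : 8 / 3 / (n : ℝ) ^ 2 = 8 / 3 * δ := by rw [hδ]; ring
    rw [this, div_le_iff₀ hb0, ha, hb]; nlinarith
  have key := Chebyshev.eval_iterate_derivative_le_of_forall_abs_le_one (k := 1) hx1.le hQdeg hQb
  simp only [Function.iterate_one] at key
  have h2 := key.trans (aux_T n hn _ hx1 hx2)
  have h3 : (derivative Q).eval (a / b) = B⁻¹ * b * (derivative F).eval 0 := by
    have : a - b * (a / b) = 0 := by field_simp; ring
    rw [hQ, derivative_C_mul, derivative_comp]
    simp [this]; ring
  rw [h3] at h2
  have h4 : b * (derivative F).eval 0 ≤ B * (16 * (n : ℝ) ^ 2 * Real.cosh 10) := by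
    rw [mul_assoc, inv_mul_le_iff₀ hB] at h2; exact h2
  have hb3 : 3 / 8 ≤ b := by rw [hb]; linarith
  have h5 : 3 / 8 * (derivative F).eval 0 ≤ b * (derivative F).eval 0 := by gcongr
  have h6 : 0 ≤ B * (16 * (n : ℝ) ^ 2 * Real.cosh 10) := by
    have := Real.cosh_pos 10
    positivity
  nlinarith

lemma aux_anti (G : ℝ[X]) : ∃ F : ℝ[X], derivative F = G ∧ F.natDegree ≤ G.natDegree + 1 := by
  refine ⟨∑ i ∈ Finset.range (G.natDegree + 1), C (G.coeff i / (i + 1)) * X ^ (i + 1), ?_, ?_⟩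
  · conv_rhs => rw [G.as_sum_range_C_mul_X_pow]
    rw [derivative_sum]
    refine Finset.sum_congr rfl fun i _ => ?_
    rw [derivative_C_mul_X_pow]
    have : ((i : ℝ) + 1) ≠ 0 := by positivity
    simp [div_mul_cancel₀ _ this]
  · apply natDegree_sum_le_of_forall_le
    intro i hi
    refine (natDegree_C_mul_X_pow_le _ _).trans ?_
    have := Finset.mem_range.1 hi; omega

lemma aux_L1 (n : ℕ) (hn : 2 ≤ n) (G : ℝ[X]) (hG : G.natDegree ≤ 3 * n) :
    |G.eval 0| ≤ 48 * Real.cosh 10 * (n : ℝ) ^ 2 * ∫ t in (1 / (n : ℝ) ^ 2)..1, |G.eval t| := by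
  obtain ⟨F, hF, hFd⟩ := aux_anti G
  have hn0 : (0 : ℝ) < n := by positivity
  have hn2 : (2 : ℝ) ≤ n := by exact_mod_cast hn
  set δ : ℝ := 1 / (n : ℝ) ^ 2 with hδ
  have hδ0 : 0 < δ := by positivity
  have hδ1 : δ < 1 := by
    rw [hδ, div_lt_one (by positivity)]; nlinarith
  set B := ∫ t in δ..1, |G.eval t| with hBd
  have hcont : Continuous fun t => |G.eval t| := by fun_prop
  have hB0 : 0 ≤ B := intervalIntegral.integral_nonneg hδ1.le fun t _ => abs_nonneg _
  have hbd : ∀ t ∈ Set.Icc δ 1, |(F - C (F.eval 1)).eval t| ≤ B := by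
    intro t ht
    have h1 : ∫ s in t..1, G.eval s = F.eval 1 - F.eval t := by
      apply intervalIntegral.integral_eq_sub_of_hasDerivAt (f := fun s => F.eval s)
      · intro x _
        rw [← hF]; exact F.hasDerivAt x
      · exact G.continuous.intervalIntegrable _ _
    have h2 := intervalIntegral.abs_integral_le_integral_abs (f := fun s => G.eval s) (μ := MeasureTheory.volume) ht.2
    have h3 : ∫ s in t..1, |G.eval s| ≤ B := by
      apply intervalIntegral.integral_mono_interval ht.1 ht.2 le_rfl
      · exact Filter.Eventually.of_forall fun x => abs_nonneg _
      · exact hcont.intervalIntegrable _ _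
    rw [h1] at h2
    simp only [eval_sub, eval_C]
    rw [abs_sub_comm]; linarith
  have hdeg : (F - C (F.eval 1)).natDegree ≤ 4 * n := by
    rw [natDegree_sub_C]; omega
  have main : ∀ ε > 0, |G.eval 0| ≤ 48 * Real.cosh 10 * (n : ℝ) ^ 2 * (B + ε) := by
    intro ε hε
    have := aux_markov n hn _ hdeg (B + ε) (by positivity) fun t ht => (hbd t ht).trans (by linarith)
    simp only [derivative_sub, derivative_C, sub_zero, hF] at this
    exact this.trans (le_of_eq (by ring))
  have hc : Filter.Tendsto (fun ε => 48 * Real.cosh 10 * (n : ℝ) ^ 2 * (B + ε)) (nhdsWithin 0 (Set.Ioi 0)) (nhds (48 * Real.cosh 10 * (n : ℝ) ^ 2 * (B + 0))) := by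
    apply tendsto_nhdsWithin_of_tendsto_nhds
    exact Continuous.tendsto (by fun_prop) 0
  rw [add_zero] at hc
  exact ge_of_tendsto hc (eventually_nhdsWithin_of_forall main)

/-- Jackson-type kernel. -/
lemma aux_R (n : ℕ) (hn : 2 ≤ n) : ∃ R : ℝ[X], R.natDegree ≤ n ∧ R.eval 0 = 2 * (n : ℝ) ^ 2 ∧
    ∀ t ∈ Set.Icc (0 : ℝ) 1, |t * R.eval t| ≤ 2 := by
  set H : ℝ[X] := 1 - (Chebyshev.T ℝ (n : ℤ)).comp (1 - C 2 * X) with hH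
  have h0 : H.coeff 0 = 0 := by
    rw [coeff_zero_eq_eval_zero]; simp [hH]
  have h1 : divX H * X = H := by
    have := divX_mul_X_add H
    simpa [h0] using this
  refine ⟨divX H, ?_, ?_, ?_⟩
  · refine natDegree_divX_le.trans ?_
    rw [hH]
    refine (natDegree_sub_le _ _).trans ?_
    have : (1 - C 2 * X : ℝ[X]).natDegree ≤ 1 := by compute_degree
    have h2 := natDegree_comp_le (p := Chebyshev.T ℝ (n : ℤ)) (q := 1 - C 2 * X)
    rw [Chebyshev.natDegree_T] at h2
    simp at h2 ⊢
    nlinarith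
  · have h2 : (derivative H).eval 0 = (divX H).eval 0 := by
      conv_lhs => rw [← h1]
      simp [derivative_mul]
    rw [← h2, hH]
    simp [derivative_comp, Chebyshev.T_derivative_eq_U]
    ring
  · intro t ht
    have h2 : t * (divX H).eval t = H.eval t := by
      conv_rhs => rw [← h1]
      simp; ring
    rw [h2, hH]
    have := Chebyshev.abs_eval_T_real_le_one (n : ℤ) (x := 1 - 2 * t) (by rw [abs_le]; constructor <;> linarith [ht.1, ht.2])
    simp only [eval_sub, eval_one, eval_comp, eval_mul, eval_C, eval_X]
    rw [abs_le] at this ⊢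
    constructor <;> linarith


/-- The weighted `L^1` estimate obtained from the kernel. -/
lemma aux_W (n : ℕ) (hn : 2 ≤ n) (P : ℝ[X]) (hP : P.natDegree ≤ n) :
    |P.eval 0| ≤ 48 * Real.cosh 10 / (n : ℝ) ^ 2 *
      ∫ t in (1 / (n : ℝ) ^ 2)..1, |P.eval t| * (t ^ 2)⁻¹ := by
  obtain ⟨R, hRd, hR0, hR⟩ := aux_R n hn
  have hn0 : (0 : ℝ) < n := by positivity
  have hn2 : (2 : ℝ) ≤ n := by exact_mod_cast hn
  have hdeg : (P * R ^ 2).natDegree ≤ 3 * n := by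
    have h1 := natDegree_mul_le (p := P) (q := R ^ 2)
    have h2 := natDegree_pow_le (p := R) (n := 2)
    omega
  have h := aux_L1 n hn _ hdeg
  set δ : ℝ := 1 / (n : ℝ) ^ 2 with hδ
  have hδ0 : 0 < δ := by positivity
  have hδ1 : δ < 1 := by
    rw [hδ, div_lt_one (by positivity)]; nlinarith
  have hint : IntervalIntegrable (fun t => |P.eval t| * (t ^ 2)⁻¹) MeasureTheory.volume δ 1 := by
    apply ContinuousOn.intervalIntegrable
    rw [Set.uIcc_of_le hδ1.le]
    apply ContinuousOn.mul (by fun_prop)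
    apply ContinuousOn.inv₀ (by fun_prop)
    intro t ht
    have : 0 < t := hδ0.trans_le ht.1
    positivity
  have h2 : ∫ t in δ..1, |(P * R ^ 2).eval t| ≤ ∫ t in δ..1, 4 * (|P.eval t| * (t ^ 2)⁻¹) := by
    apply intervalIntegral.integral_mono_on hδ1.le
    · apply Continuous.intervalIntegrable; fun_prop
    · exact hint.const_mul 4
    · intro t ht
      have ht0 : 0 < t := hδ0.trans_le ht.1
      have h3 := hR t ⟨ht0.le, ht.2⟩
      have h4 : (R.eval t) ^ 2 ≤ 4 * (t ^ 2)⁻¹ := by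
        rw [← div_eq_mul_inv, le_div_iff₀ (by positivity)]
        have := sq_le_sq' (by linarith [abs_nonneg (t * R.eval t)]) h3
        rw [sq_abs] at this
        nlinarith
      rw [eval_mul, eval_pow, abs_mul, abs_of_nonneg (sq_nonneg (R.eval t))]
      nlinarith [mul_le_mul_of_nonneg_left h4 (abs_nonneg (P.eval t))]
  rw [intervalIntegral.integral_const_mul] at h2
  set J := ∫ t in δ..1, |P.eval t| * (t ^ 2)⁻¹
  rw [eval_mul, eval_pow, hR0, abs_mul,
    abs_of_nonneg (a := (2 * (n : ℝ) ^ 2) ^ 2) (by positivity)] at h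
  have hc := Real.cosh_pos 10
  have h5 := h.trans (mul_le_mul_of_nonneg_left h2 (by positivity))
  rw [div_mul_eq_mul_div, le_div_iff₀ (by positivity)]
  have h6 : (4 * (n : ℝ) ^ 2) * (|P.eval 0| * (n : ℝ) ^ 2) ≤ (4 * (n : ℝ) ^ 2) * (48 * Real.cosh 10 * J) := by
    nlinarith
  exact le_of_mul_le_mul_left h6 (by positivity)

lemma aux_young (p : ℝ) (hp : 1 ≤ p) (a e : ℝ) (ha : 0 ≤ a) (he : 0 < e) :
    a ≤ e + e ^ (1 - p) * a ^ p := by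
  by_cases h : a ≤ e
  · have : 0 ≤ e ^ (1 - p) * a ^ p := by positivity
    linarith
  · push Not at h
    have ha0 : 0 < a := he.trans h
    have h1 : e ^ (p - 1) ≤ a ^ (p - 1) := Real.rpow_le_rpow he.le h.le (by linarith)
    have h2 : a ^ p = a * a ^ (p - 1) := by
      rw [Real.rpow_sub_one ha0.ne']; field_simp
    have h3 : e ^ (1 - p) * e ^ (p - 1) = 1 := by
      rw [← Real.rpow_add he]; simp
    have h4 : 0 < e ^ (1 - p) := by positivity
    have h5 : 1 ≤ e ^ (1 - p) * a ^ (p - 1) := by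
      exact h3.symm.le.trans (by gcongr)
    rw [h2]; nlinarith

theorem stmt_12 (α : ℝ) (hα : -1 < α) (p : ℝ) (hp : 1 ≤ p) :
    ∃ c : ℝ, 0 < c ∧ ∀ n : ℕ, 2 ≤ n → ∀ P : Polynomial ℝ, P.natDegree ≤ n →
      c * |P.eval 0| ^ p * (n : ℝ) ^ (-(2 + 2 * α)) ≤
        ∫ t in (0 : ℝ)..1, t ^ α * |P.eval t| ^ p := by
  set K : ℝ := 48 * Real.cosh 10 with hK
  have hK0 : 0 < K := by have := Real.cosh_pos 10; positivity
  set ε : ℝ := 1 / (2 * K) with hε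
  have hε0 : 0 < ε := by positivity
  refine ⟨ε * ε ^ (p - 1), by positivity, ?_⟩
  intro n hn P hP
  have hn0 : (0 : ℝ) < n := by positivity
  have hn2 : (2 : ℝ) ≤ n := by exact_mod_cast hn
  have hI0 : 0 ≤ ∫ t in (0 : ℝ)..1, t ^ α * |P.eval t| ^ p := by
    apply intervalIntegral.integral_nonneg (by norm_num)
    intro t ht
    have := ht.1
    positivity
  have hI : IntervalIntegrable (fun t => t ^ α * |P.eval t| ^ p) MeasureTheory.volume 0 1 := by
    apply (intervalIntegral.intervalIntegrable_rpow' hα).mul_continuousOn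
    apply Continuous.continuousOn
    exact (by fun_prop : Continuous fun t => |P.eval t|).rpow_const fun _ => Or.inr (by linarith)
  rcases (abs_nonneg (P.eval 0)).eq_or_lt with hA | hA
  · rw [← hA, Real.zero_rpow (by linarith)]
    simpa using hI0
  have hW := aux_W n hn P hP
  rw [← hK] at hW
  set A := |P.eval 0| with hAd
  set I := ∫ t in (0 : ℝ)..1, t ^ α * |P.eval t| ^ p with hId
  set δ : ℝ := 1 / (n : ℝ) ^ 2 with hδ
  have hδ0 : 0 < δ := by positivity
  have hδ1 : δ < 1 := by
    rw [hδ, div_lt_one (by positivity)]; nlinarith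
  have hint : ∀ f : ℝ → ℝ, Continuous f →
      IntervalIntegrable (fun t => f t * (t ^ 2)⁻¹) MeasureTheory.volume δ 1 := by
    intro f hf
    apply ContinuousOn.intervalIntegrable
    rw [Set.uIcc_of_le hδ1.le]
    apply ContinuousOn.mul (by fun_prop)
    apply ContinuousOn.inv₀ (by fun_prop)
    intro t ht
    have : 0 < t := hδ0.trans_le ht.1
    positivity
  have hI' : IntervalIntegrable (fun t => t ^ α * |P.eval t| ^ p) MeasureTheory.volume δ 1 := by
    apply hI.mono_set
    rw [Set.uIcc_of_le hδ1.le, Set.uIcc_of_le zero_le_one]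
    exact Set.Icc_subset_Icc hδ0.le le_rfl
  have hII : ∫ t in δ..1, t ^ α * |P.eval t| ^ p ≤ I := by
    apply intervalIntegral.integral_mono_interval hδ0.le hδ1.le le_rfl
    · refine (MeasureTheory.ae_restrict_iff' measurableSet_Ioc).2 (Filter.Eventually.of_forall ?_)
      intro t ht
      have := ht.1.le
      simp only [Pi.zero_apply]
      positivity
    · exact hI
  have hi1 : IntervalIntegrable (fun t : ℝ => (t ^ 2)⁻¹) MeasureTheory.volume δ 1 := by
    simpa using hint (fun _ => 1) continuous_const
  have hsq : ∫ t in δ..1, (t ^ 2)⁻¹ ≤ (n : ℝ) ^ 2 := by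
    have : ∫ t in δ..1, (t ^ 2)⁻¹ = (- (1 : ℝ)⁻¹) - (- δ⁻¹) := by
      apply intervalIntegral.integral_eq_sub_of_hasDerivAt (f := fun t => - t⁻¹)
      · intro x hx
        rw [Set.uIcc_of_le hδ1.le] at hx
        have : x ≠ 0 := (hδ0.trans_le hx.1).ne'
        have h := (hasDerivAt_inv this).neg
        rw [neg_neg] at h
        exact h
      · exact hi1
    rw [this, hδ]
    simp
  set e := ε * A with he
  have he0 : 0 < e := by positivity
  set N : ℝ := (n : ℝ) ^ (4 + 2 * α) with hN
  have hJ : ∫ t in δ..1, |P.eval t| * (t ^ 2)⁻¹ ≤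
      ∫ t in δ..1, (e * (t ^ 2)⁻¹ + (e ^ (1 - p) * N) * (t ^ α * |P.eval t| ^ p)) := by
    apply intervalIntegral.integral_mono_on hδ1.le
    · exact hint _ (by fun_prop)
    · exact (hi1.const_mul _).add (hI'.const_mul _)
    · intro t ht
      have ht0 : 0 < t := hδ0.trans_le ht.1
      have h1 := aux_young p hp _ e (abs_nonneg (P.eval t)) he0
      have hw : (t ^ 2)⁻¹ ≤ N * t ^ α := by
        have hs : 1 ≤ (n : ℝ) ^ 2 * t := by
          have := ht.1
          rw [hδ, div_le_iff₀ (by positivity)] at this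
          linarith
        have h2 : ((n : ℝ) ^ 2 * t) ^ (-2 : ℝ) ≤ ((n : ℝ) ^ 2 * t) ^ α :=
          Real.rpow_le_rpow_of_exponent_le hs (by linarith)
        rw [Real.mul_rpow (by positivity) ht0.le, Real.mul_rpow (by positivity) ht0.le,
          ← Real.rpow_natCast, ← Real.rpow_mul hn0.le, ← Real.rpow_mul hn0.le] at h2
        have h3 : N = (n : ℝ) ^ 4 * (n : ℝ) ^ (2 * α) := by
          rw [hN, Real.rpow_add hn0]; norm_num
        have h6 : (0 : ℝ) < (n : ℝ) ^ 4 := by positivity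
        norm_num at h2
        have h7 := mul_le_mul_of_nonneg_left h2 h6.le
        rw [← mul_assoc, mul_inv_cancel₀ h6.ne', one_mul] at h7
        rw [h3, mul_assoc]
        exact h7
      have h8 : 0 ≤ e ^ (1 - p) * |P.eval t| ^ p := by positivity
      have h9 : 0 ≤ (t ^ 2)⁻¹ := by positivity
      have h10 := mul_le_mul_of_nonneg_right h1 h9
      have h11 := mul_le_mul_of_nonneg_left hw h8
      nlinarith
  rw [intervalIntegral.integral_add (hi1.const_mul _) (hI'.const_mul _),
    intervalIntegral.integral_const_mul, intervalIntegral.integral_const_mul] at hJ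
  have hN0 : 0 < N := by positivity
  have hJ2 : ∫ t in δ..1, |P.eval t| * (t ^ 2)⁻¹ ≤ e * (n : ℝ) ^ 2 + e ^ (1 - p) * N * I := by
    refine hJ.trans ?_
    gcongr
  have h1 := hW.trans (mul_le_mul_of_nonneg_left hJ2 (by positivity))
  have h2 : K / (n : ℝ) ^ 2 * (e * (n : ℝ) ^ 2 + e ^ (1 - p) * N * I)
      = A / 2 + K * e ^ (1 - p) * (N / (n : ℝ) ^ 2) * I := by
    rw [he, hε]; field_simp
  rw [h2] at h1
  have h3 : N / (n : ℝ) ^ 2 = (n : ℝ) ^ (2 + 2 * α) := by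
    rw [hN, ← Real.rpow_natCast, ← Real.rpow_sub hn0]; congr 1; push_cast; ring
  rw [h3] at h1
  have h4 : A / 2 ≤ K * e ^ (1 - p) * (n : ℝ) ^ (2 + 2 * α) * I := by linarith
  have h5 : e ^ (p - 1) * e ^ (1 - p) = 1 := by
    rw [← Real.rpow_add he0]; simp
  have h6 : (n : ℝ) ^ (-(2 + 2 * α)) * (n : ℝ) ^ (2 + 2 * α) = 1 := by
    rw [← Real.rpow_add hn0]; simp
  have h7 : e ^ (p - 1) = ε ^ (p - 1) * A ^ (p - 1) := Real.mul_rpow hε0.le hA.le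
  have h8 : A ^ p = A * A ^ (p - 1) := by
    rw [Real.rpow_sub_one hA.ne']; field_simp
  have hKε : K * ε * 2 = 1 := by rw [hε]; field_simp
  have h9 : 0 ≤ 2 * ε * e ^ (p - 1) * (n : ℝ) ^ (-(2 + 2 * α)) := by positivity
  have h10 := mul_le_mul_of_nonneg_left h4 h9
  calc ε * ε ^ (p - 1) * A ^ p * (n : ℝ) ^ (-(2 + 2 * α))
      = 2 * ε * e ^ (p - 1) * (n : ℝ) ^ (-(2 + 2 * α)) * (A / 2) := by rw [h7, h8]; ring
    _ ≤ _ := h10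
    _ = (K * ε * 2) * (e ^ (p - 1) * e ^ (1 - p)) *
        ((n : ℝ) ^ (-(2 + 2 * α)) * (n : ℝ) ^ (2 + 2 * α)) * I := by ring
    _ = I := by rw [hKε, h5, h6]; ring
end

section
/- (Remez inequality) Let h ∈ (0,2) and let p be a real polynomial of degree at most n such that the Lebesgue measure of {x ∈ [−1,1] : |p(x)| ≤ 1} is at least 2 − h. Then max_{[−1,1]} |p(x)| ≤ Cₙ((2+h)/(2−h)), where Cₙ is the Chebyshev polynomial of degree n for [−1,1]. -/
open Polynomial MeasureTheory in
theorem remez_lagrange (n : ℕ) (p : ℝ[X]) (hp : p.natDegree ≤ n) (v : ℕ → ℝ)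
    (hv : Set.InjOn v (Finset.range (n + 1))) (x : ℝ) :
    p.eval x = ∑ i ∈ Finset.range (n + 1),
      p.eval (v i) * ∏ j ∈ (Finset.range (n + 1)).erase i, ((x - v j) / (v i - v j)) := by
  have hd : p.degree < (Finset.range (n + 1)).card := by
    rw [Finset.card_range]
    exact lt_of_le_of_lt degree_le_natDegree (by exact_mod_cast Nat.lt_succ_of_le hp)
  conv_lhs => rw [Lagrange.eq_interpolate hv hd]
  rw [Lagrange.interpolate_apply, eval_finsetSum]
  refine Finset.sum_congr rfl fun i _ => ?_
  rw [eval_mul, eval_C, Lagrange.basis, eval_prod]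
  congr 1
  refine Finset.prod_congr rfl fun j _ => ?_
  simp [Lagrange.basisDivisor, div_eq_mul_inv, mul_comm]

open Polynomial Polynomial.Chebyshev in
theorem remez_T_eq (n : ℕ) (X : ℝ) :
    (T ℝ n).eval X = ∑ i ∈ Finset.range (n + 1),
      ∏ j ∈ (Finset.range (n + 1)).erase i, ((X - node n j) / |node n i - node n j|) := by
  rw [remez_lagrange n (T ℝ n) (by simp [natDegree_T]) (node n) (strictAntiOn_node n).injOn X]
  refine Finset.sum_congr rfl fun i hi => ?_
  have hi' : i ≤ n := by simpa [Nat.lt_succ_iff] using hi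
  rw [eval_T_real_node (by simpa using hi'), Finset.prod_div_distrib, Finset.prod_div_distrib,
    ← Finset.abs_prod]
  have h := zero_lt_prod_node_sub_node hi'
  set P := ∏ j ∈ (Finset.range (n + 1)).erase i, (node n i - node n j)
  have h2 : |P| = (-1) ^ i * P := by
    rw [← abs_of_pos h, abs_mul, abs_neg_one_pow, one_mul]
  rw [h2]
  rcases neg_one_pow_eq_or ℝ i with e | e <;> rw [e]
  · simp
  · rw [neg_one_mul, neg_one_mul, div_neg]

open MeasureTheory in
theorem remez_points (F : Set ℝ) (hF : IsCompact F) (c x₀ m : ℝ) (hsub : F ⊆ Set.Icc c x₀)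
    (hm : 0 < m) (hvol : m ≤ volume.real F) :
    ∃ y : ℝ → ℝ, ∀ t ∈ Set.Icc 0 m, y t ∈ F ∧ volume.real (F ∩ Set.Iic (y t)) = t := by
  have hfin : ∀ x, volume (F ∩ Set.Iic x) ≠ ⊤ := fun x =>
    ((measure_mono Set.inter_subset_left).trans_lt hF.measure_lt_top).ne
  have hmono : Monotone fun x => volume.real (F ∩ Set.Iic x) := fun a b hab =>
    measureReal_mono (Set.inter_subset_inter_right _ (Set.Iic_subset_Iic.2 hab)) (hfin b)
  have hlip : ∀ a b, a ≤ b → volume.real (F ∩ Set.Iic b) ≤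
      volume.real (F ∩ Set.Iic a) + (b - a) := by
    intro a b hab
    have h1 : F ∩ Set.Iic b ⊆ (F ∩ Set.Iic a) ∪ Set.Icc a b := by
      rintro z ⟨hz, hzb⟩
      rcases le_total z a with h | h
      · exact Or.inl ⟨hz, h⟩
      · exact Or.inr ⟨h, hzb⟩
    refine (measureReal_mono h1 ?_).trans ((measureReal_union_le _ _).trans ?_)
    · exact (measure_union_lt_top (hfin a).lt_top measure_Icc_lt_top).ne
    · rw [Real.volume_real_Icc_of_le hab]
  have hcont : Continuous fun x => volume.real (F ∩ Set.Iic x) := by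
    have : LipschitzWith 1 fun x => volume.real (F ∩ Set.Iic x) := by
      refine LipschitzWith.of_le_add fun a b => ?_
      rcases le_total a b with h | h
      · exact (hmono h).trans (by simp)
      · rw [Real.dist_eq, abs_of_nonneg (by linarith)]
        exact hlip b a h
    exact this.continuous
  have hne : F.Nonempty := by
    by_contra h
    rw [Set.not_nonempty_iff_eq_empty] at h
    rw [h] at hvol
    simp at hvol
    linarith
  have key : ∀ t ∈ Set.Icc 0 m, ∃ y, y ∈ F ∧ volume.real (F ∩ Set.Iic y) = t := by
    rintro t ⟨ht0, htm⟩
    rcases ht0.eq_or_lt with rfl | ht0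
    · obtain ⟨y, hy⟩ := hF.exists_isLeast hne
      refine ⟨y, hy.1, ?_⟩
      have : F ∩ Set.Iic y ⊆ {y} := fun z hz => le_antisymm hz.2 (hy.2 hz.1)
      exact measureReal_mono_null this (by simp [Measure.real]) (by simp)
    · have hcx : c ≤ x₀ := by
        obtain ⟨z, hz⟩ := hne
        exact (hsub hz).1.trans (hsub hz).2
      have h1 : volume.real (F ∩ Set.Iic c) = 0 := by
        have : F ∩ Set.Iic c ⊆ {c} := fun z hz => le_antisymm hz.2 (hsub hz.1).1
        exact measureReal_mono_null this (by simp [Measure.real]) (by simp)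
      have h2 : F ∩ Set.Iic x₀ = F := Set.inter_eq_left.2 fun z hz => (hsub hz).2
      obtain ⟨x, -, hx⟩ := intermediate_value_Icc hcx hcont.continuousOn
        (show t ∈ Set.Icc _ _ from ⟨by rw [h1]; exact ht0.le, by rw [h2]; linarith⟩)
      have hx : volume.real (F ∩ Set.Iic x) = t := hx
      have hne' : (F ∩ Set.Iic x).Nonempty := by
        by_contra h
        rw [Set.not_nonempty_iff_eq_empty] at h
        rw [h] at hx
        simp at hx
        linarith
      obtain ⟨y, hy⟩ := (hF.inter_right isClosed_Iic).exists_isGreatest hne'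
      refine ⟨y, hy.1.1, ?_⟩
      rw [← hx]
      congr 1
      ext z
      exact ⟨fun hz => ⟨hz.1, Set.mem_Iic.2 (le_trans hz.2 hy.1.2)⟩, fun hz => ⟨hz.1, hy.2 hz⟩⟩
  choose! y hy using key
  exact ⟨y, hy⟩

open MeasureTheory Polynomial Polynomial.Chebyshev in
theorem remez_endpoint (n : ℕ) (p : ℝ[X]) (hp : p.natDegree ≤ n)
    (F : Set ℝ) (hF : IsCompact F) (c x₀ m : ℝ) (hsub : F ⊆ Set.Icc c x₀)
    (hm : 0 < m) (hvol : m ≤ volume.real F) (hb : ∀ x ∈ F, |p.eval x| ≤ 1) :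
    |p.eval x₀| ≤ (T ℝ n).eval (2 * (x₀ - c) / m - 1) := by
  obtain ⟨y, hy⟩ := remez_points F hF c x₀ m hsub hm hvol
  have hne : F.Nonempty := ⟨y 0, (hy 0 ⟨le_rfl, hm.le⟩).1⟩
  have hcx : c ≤ x₀ := by
    obtain ⟨z, hz⟩ := hne
    exact (hsub hz).1.trans (hsub hz).2
  have hmle : m ≤ x₀ - c := by
    refine hvol.trans ((measureReal_mono hsub (by simp)).trans ?_)
    rw [Real.volume_real_Icc_of_le hcx]
  have hlow : ∀ t ∈ Set.Icc 0 m, t ≤ y t - c := by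
    intro t ht
    have h1 : F ∩ Set.Iic (y t) ⊆ Set.Icc c (y t) := fun z hz => ⟨(hsub hz.1).1, hz.2⟩
    have h2 := measureReal_mono (μ := volume) h1 (by simp)
    rw [(hy t ht).2, Real.volume_real_Icc_of_le (hsub (hy t ht).1).1] at h2
    exact h2
  have hinc : ∀ s ∈ Set.Icc 0 m, ∀ t ∈ Set.Icc 0 m, s < t → t - s ≤ y t - y s := by
    intro s hs t ht hst
    have hst' : y s ≤ y t := by
      by_contra! h
      have h2 := measureReal_mono (μ := volume)
        (Set.inter_subset_inter_right F (Set.Iic_subset_Iic.2 h.le))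
        ((measure_mono Set.inter_subset_left).trans_lt hF.measure_lt_top).ne
      rw [(hy t ht).2, (hy s hs).2] at h2
      linarith
    have h1 : F ∩ Set.Iic (y t) ⊆ (F ∩ Set.Iic (y s)) ∪ Set.Icc (y s) (y t) := by
      rintro z ⟨hz, hzb⟩
      rcases le_total z (y s) with h | h
      · exact Or.inl ⟨hz, h⟩
      · exact Or.inr ⟨h, hzb⟩
    have h2 := (measureReal_mono (μ := volume) h1 (measure_union_lt_top
      ((measure_mono Set.inter_subset_left).trans_lt hF.measure_lt_top)
      measure_Icc_lt_top).ne).trans (measureReal_union_le _ _)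
    rw [(hy t ht).2, (hy s hs).2, Real.volume_real_Icc_of_le hst'] at h2
    linarith
  have hinc' : ∀ s ∈ Set.Icc 0 m, ∀ t ∈ Set.Icc 0 m, |s - t| ≤ |y s - y t| := by
    intro s hs t ht
    rcases lt_trichotomy s t with h | h | h
    · rw [abs_sub_comm s, abs_sub_comm (y s), abs_of_pos (by linarith)]
      exact (hinc s hs t ht h).trans (le_abs_self _)
    · simp [h]
    · rw [abs_of_pos (by linarith)]
      exact (hinc t ht s hs h).trans (le_abs_self _)
  set X := 2 * (x₀ - c) / m - 1 with hXdef
  have hX1 : 1 ≤ X := by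
    have : 2 ≤ 2 * (x₀ - c) / m := by rw [le_div_iff₀ hm]; linarith
    linarith
  have hXm : m / 2 * X = x₀ - c - m / 2 := by rw [hXdef]; field_simp
  let τ : ℕ → ℝ := fun i => m / 2 * (1 + node n i)
  have hτ : ∀ i, τ i ∈ Set.Icc 0 m := by
    intro i
    have h := node_mem_Icc (n := n) (i := i)
    constructor
    · exact mul_nonneg (by linarith) (by linarith [h.1])
    · change m / 2 * (1 + node n i) ≤ m
      nlinarith [h.2]
  have hdist : ∀ i j, m / 2 * |node n i - node n j| ≤ |y (τ i) - y (τ j)| := by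
    intro i j
    have := hinc' _ (hτ i) _ (hτ j)
    have e : τ i - τ j = m / 2 * (node n i - node n j) := by simp only [τ]; ring
    rwa [e, abs_mul, abs_of_pos (by linarith : 0 < m / 2)] at this
  have hnode : ∀ i ∈ Finset.range (n + 1), ∀ j ∈ Finset.range (n + 1), i ≠ j →
      0 < |node n i - node n j| := fun i hi j hj hij =>
    abs_pos.2 (sub_ne_zero.2 fun h => hij ((strictAntiOn_node n).injOn hi hj h))
  have hinj : Set.InjOn (fun i => y (τ i)) (Finset.range (n + 1)) := by
    intro i hi j hj hij
    by_contra hne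
    have h1 := hnode i hi j hj hne
    have h2 := hdist i j
    have hij : y (τ i) = y (τ j) := hij
    rw [hij, sub_self, abs_zero] at h2
    nlinarith
  rw [remez_lagrange n p hp _ hinj x₀, remez_T_eq n X]
  refine (Finset.abs_sum_le_sum_abs _ _).trans (Finset.sum_le_sum fun i hi => ?_)
  rw [abs_mul, Finset.abs_prod]
  refine (mul_le_of_le_one_left (Finset.prod_nonneg fun _ _ => abs_nonneg _)
    (hb _ (hy _ (hτ i)).1)).trans ?_
  refine Finset.prod_le_prod (fun _ _ => abs_nonneg _) fun j hj => ?_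
  have hj' := Finset.mem_erase.1 hj
  have h1 := hnode i hi j hj'.2 hj'.1.symm
  have h2 := hdist i j
  have h3 := hlow _ (hτ j)
  have h4 := (hsub (hy _ (hτ j)).1).2
  rw [abs_div, abs_of_nonneg (by linarith : 0 ≤ x₀ - y (τ j))]
  have h5 : x₀ - y (τ j) ≤ m / 2 * (X - node n j) := by
    have : m / 2 * (X - node n j) = x₀ - c - τ j := by
      rw [mul_sub, hXm]; simp only [τ]; ring
    linarith
  rw [← mul_div_mul_left (X - node n j) _ (by linarith : m / 2 ≠ 0)]
  have h6 : 0 < m / 2 * |node n i - node n j| := by positivity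
  exact div_le_div₀ (by linarith) h5 h6 h2

theorem stmt_17 (h : ℝ) (hh : h ∈ Set.Ioo (0 : ℝ) 2) (n : ℕ) (p : Polynomial ℝ)
    (hdeg : p.natDegree ≤ n)
    (hmeas : ENNReal.ofReal (2 - h) ≤
      MeasureTheory.volume {x ∈ Set.Icc (-1 : ℝ) 1 | |p.eval x| ≤ 1}) :
    ∀ x ∈ Set.Icc (-1 : ℝ) 1,
      |p.eval x| ≤ (Polynomial.Chebyshev.T ℝ n).eval ((2 + h) / (2 - h)) := by
  intro x hx
  obtain ⟨h0, h2⟩ := hh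
  set E := {x ∈ Set.Icc (-1 : ℝ) 1 | |p.eval x| ≤ 1} with hE
  have hEc : IsCompact E := by
    have hcl : IsClosed {x : ℝ | |p.eval x| ≤ 1} :=
      isClosed_le p.continuous.abs continuous_const
    exact isCompact_Icc.inter_right hcl
  have hEv : 2 - h ≤ MeasureTheory.volume.real E :=
    (ENNReal.ofReal_le_iff_le_toReal hEc.measure_lt_top.ne).1 hmeas
  have hE1 : IsCompact (E ∩ Set.Iic x) := hEc.inter_right isClosed_Iic
  have hE2 : IsCompact (E ∩ Set.Ici x) := hEc.inter_right isClosed_Ici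
  have hsplit : 2 - h ≤ MeasureTheory.volume.real (E ∩ Set.Iic x) +
      MeasureTheory.volume.real (E ∩ Set.Ici x) := by
    refine hEv.trans (le_trans (le_of_eq ?_) (MeasureTheory.measureReal_union_le _ _))
    rw [← Set.inter_union_distrib_left, Set.Iic_union_Ici, Set.inter_univ]
  have left : ∀ _ : 0 < x + 1, (x + 1) * (2 - h) / 2 ≤ MeasureTheory.volume.real (E ∩ Set.Iic x) →
      |p.eval x| ≤ (Polynomial.Chebyshev.T ℝ n).eval ((2 + h) / (2 - h)) := by
    intro hpos hv
    have hm : 0 < (x + 1) * (2 - h) / 2 := by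
      have : 0 < 2 - h := by linarith
      positivity
    have := remez_endpoint n p hdeg _ hE1 (-1) x _ (fun z hz => ⟨hz.1.1.1, hz.2⟩) hm hv
      (fun z hz => hz.1.2)
    convert this using 2
    have h3 : 2 - h ≠ 0 := by linarith
    have h4 : x + 1 ≠ 0 := hpos.ne'
    rw [sub_neg_eq_add]
    field_simp
    ring
  have right : ∀ _ : 0 < 1 - x, (1 - x) * (2 - h) / 2 ≤ MeasureTheory.volume.real (E ∩ Set.Ici x) →
      |p.eval x| ≤ (Polynomial.Chebyshev.T ℝ n).eval ((2 + h) / (2 - h)) := by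
    intro hpos hv
    have hm : 0 < (1 - x) * (2 - h) / 2 := by
      have : 0 < 2 - h := by linarith
      positivity
    have hvn : MeasureTheory.volume.real (-(E ∩ Set.Ici x)) =
        MeasureTheory.volume.real (E ∩ Set.Ici x) := by
      simp only [MeasureTheory.Measure.real, MeasureTheory.Measure.measure_neg]
    have := remez_endpoint n (p.comp (-Polynomial.X))
      (by rw [Polynomial.natDegree_comp]; simpa using hdeg) _ hE2.neg (-1) (-x) _
      (fun z hz => by
        have hz1 := hz.1.1.2
        have hz2 : x ≤ -z := hz.2
        exact ⟨by linarith, by linarith⟩) hm (by rw [hvn]; exact hv)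
      (fun z hz => by simpa using hz.1.2)
    simp only [Polynomial.eval_comp, Polynomial.eval_neg, Polynomial.eval_X, neg_neg] at this
    convert this using 2
    have h3 : 2 - h ≠ 0 := by linarith
    have h4 : 1 - x ≠ 0 := hpos.ne'
    rw [show -x - -1 = 1 - x by ring]
    field_simp
    ring
  have null : ∀ a : ℝ, ∀ S : Set ℝ, S ⊆ {a} → MeasureTheory.volume.real S = 0 := fun a S hS =>
    MeasureTheory.measureReal_mono_null hS (by simp [MeasureTheory.Measure.real]) (by simp)
  rcases hx.1.eq_or_lt with e | hx1
  · refine right (by linarith) ?_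
    have := null (-1) (E ∩ Set.Iic x) fun z hz => le_antisymm (by rw [e]; exact hz.2) hz.1.1.1
    have e2 : (1 - x) * (2 - h) / 2 = 2 - h := by rw [← e]; ring
    linarith
  rcases hx.2.eq_or_lt with e | hx2
  · refine left (by linarith) ?_
    have := null 1 (E ∩ Set.Ici x) fun z hz => le_antisymm hz.1.1.2 (by rw [← e]; exact hz.2)
    have e2 : (x + 1) * (2 - h) / 2 = 2 - h := by rw [e]; ring
    linarith
  by_cases hc : (x + 1) * (2 - h) / 2 ≤ MeasureTheory.volume.real (E ∩ Set.Iic x)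
  · exact left (by linarith) hc
  · refine right (by linarith) ?_
    push Not at hc
    linarith
end

section
/- Let α ≥ 0 and m ∈ ℕ. Then min over polynomials pₙ of degree ≤ n of max_{t ∈ [0,1]} t^α |1 − t^m pₙ(t)| is bounded below by c(α,m)·n^{−2α} and above by C(α,m)·n^{−2α}, i.e. it is asymptotically of order n^{−2α} as n → ∞. -/
open Polynomial in
/-- A normalized Fejer-type kernel. -/
theorem aux_kernel (k : ℕ) (hk : 1 ≤ k) :
    ∃ K : Polynomial ℝ, K.natDegree ≤ k ∧ K.eval 0 = 1 ∧
      ∀ t ∈ Set.Icc (0 : ℝ) 1, 0 ≤ K.eval t ∧ K.eval t ≤ 1 ∧ t * K.eval t ≤ 1 / (k : ℝ) ^ 2 := by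
  have hk0 : (0 : ℝ) < k := by exact_mod_cast hk
  set A : ℝ[X] := (Chebyshev.T ℝ (k : ℤ)).comp (1 - 2 * X) with hA
  have hAe : ∀ t : ℝ, A.eval t = (Chebyshev.T ℝ (k : ℤ)).eval (1 - 2 * t) := by
    intro t; simp [hA]
  have hdvd : (X : ℝ[X]) ∣ 1 - A := by
    rw [X_dvd_iff, coeff_zero_eq_eval_zero]
    simp [hAe]
  obtain ⟨B, hB⟩ := hdvd
  have hB0 : B.eval 0 = 2 * (k : ℝ) ^ 2 := by
    have h1 := congrArg (fun q => (derivative q).eval 0) hB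
    simp only [hA, derivative_sub, derivative_one, derivative_comp, derivative_mul, derivative_X] at h1
    simp [Chebyshev.derivative_T_eval_one] at h1
    linarith
  have hBe : ∀ t : ℝ, t * B.eval t = 1 - (Chebyshev.T ℝ (k : ℤ)).eval (1 - 2 * t) := by
    intro t
    have h1 := congrArg (fun q => q.eval t) hB
    simp [hAe] at h1
    linarith
  have hAdeg : A.natDegree ≤ k := by
    rw [hA]
    refine natDegree_comp_le.trans ?_
    have : (1 - 2 * X : ℝ[X]).natDegree ≤ 1 := by compute_degree
    rw [Chebyshev.natDegree_T]
    simpa using Nat.mul_le_mul_left k this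
  have hBdeg : B.natDegree ≤ k := by
    by_cases hz : B = 0
    · simp [hz]
    have h1 : (X * B).natDegree ≤ k := by
      rw [← hB]
      refine (natDegree_sub_le _ _).trans ?_
      simpa using hAdeg
    rw [natDegree_X_mul hz] at h1
    omega
  have hK : ∀ t : ℝ, (C (1 / (2 * (k : ℝ) ^ 2)) * B).eval t = B.eval t / (2 * (k : ℝ) ^ 2) := by
    intro t; simp; ring
  refine ⟨C (1 / (2 * (k : ℝ) ^ 2)) * B, (natDegree_C_mul_le _ _).trans hBdeg, ?_, ?_⟩
  · rw [hK, hB0]; field_simp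
  intro t ht
  obtain ⟨ht0, ht1⟩ := ht
  rw [hK]
  have hT : |(Chebyshev.T ℝ (k : ℤ)).eval (1 - 2 * t)| ≤ 1 :=
    Chebyshev.abs_eval_T_real_le_one _ (by rw [abs_le]; constructor <;> linarith)
  rw [abs_le] at hT
  have hup : t * (B.eval t / (2 * (k : ℝ) ^ 2)) ≤ 1 / (k : ℝ) ^ 2 := by
    rw [← mul_div_assoc, hBe, div_le_div_iff₀ (by positivity) (by positivity)]
    nlinarith [sq_nonneg (k : ℝ)]
  rcases ht0.eq_or_lt with h0 | h0
  · subst h0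
    rw [hB0, div_self (by positivity)]
    refine ⟨by norm_num, le_refl _, ?_⟩
    rw [zero_mul]; positivity
  refine ⟨?_, ?_, hup⟩
  · apply div_nonneg _ (by positivity)
    have : 0 ≤ t * B.eval t := by rw [hBe]; linarith
    exact nonneg_of_mul_nonneg_right this h0
  · rw [div_le_one (by positivity)]
    have h2 : t * B.eval t ≤ t * (2 * (k : ℝ) ^ 2) := by
      rw [hBe]
      have hd : ∀ x ∈ Set.Icc (-1 : ℝ) 1, DifferentiableWithinAt ℝ
          (fun x => (Chebyshev.T ℝ (k : ℤ)).eval x) (Set.Icc (-1 : ℝ) 1) x := by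
        intro x _
        exact (Polynomial.differentiable _).differentiableAt.differentiableWithinAt
      have hb : ∀ x ∈ Set.Icc (-1 : ℝ) 1,
          ‖deriv (fun x => (Chebyshev.T ℝ (k : ℤ)).eval x) x‖ ≤ (k : ℝ) ^ 2 := by
        intro x hx
        rw [Polynomial.deriv, Real.norm_eq_abs]
        have := Chebyshev.abs_iterate_derivative_T_real_le (k : ℤ) 1 (x := x) (abs_le.2 hx)
        simpa [Chebyshev.derivative_T_eval_one] using this
      have := (convex_Icc (-1 : ℝ) 1).norm_image_sub_le_of_norm_deriv_le
        (f := fun x => (Chebyshev.T ℝ (k : ℤ)).eval x) (C := (k : ℝ) ^ 2)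
        (x := 1 - 2 * t) (y := 1)
        (fun x _ => (Polynomial.differentiable _).differentiableAt) hb
        ⟨by linarith, by linarith⟩ ⟨by norm_num, le_refl _⟩
      simp only [Chebyshev.T_eval_one, Real.norm_eq_abs] at this
      rw [show (1 : ℝ) - (1 - 2 * t) = 2 * t by ring, abs_of_nonneg (by linarith : 0 ≤ 2 * t)] at this
      have := (le_abs_self _).trans this
      linarith
    exact le_of_mul_le_mul_left h2 h0

open Polynomial in
theorem aux_upper (α : ℝ) (hα : 0 ≤ α) (m : ℕ) (hm : 1 ≤ m) (s : ℕ) (hs : 1 ≤ s)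
    (hsα : α ≤ s) (n : ℕ) (hn : 2 ≤ n) :
    ∃ p : Polynomial ℝ, p.natDegree ≤ n ∧
        ∀ t ∈ Set.Icc (0 : ℝ) 1,
          t ^ α * |1 - t ^ m * p.eval t| ≤
            (m * (2 * m * s : ℝ) ^ (2 * α)) * (n : ℝ) ^ (-(2 * α)) := by
  have hn0 : (0 : ℝ) < n := by exact_mod_cast (by omega : 0 < n)
  have hm1 : (1 : ℝ) ≤ m := by exact_mod_cast hm
  have hs1 : (1 : ℝ) ≤ s := by exact_mod_cast hs
  have hms0 : 0 < m * s := by positivity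
  have hCeq : (m * (2 * m * s : ℝ) ^ (2 * α)) * (n : ℝ) ^ (-(2 * α))
      = m * ((2 * m * s : ℝ) / n) ^ (2 * α) := by
    rw [Real.rpow_neg hn0.le, Real.div_rpow (by positivity) hn0.le]; ring
  rw [hCeq]
  by_cases hlt : n < m * s
  · refine ⟨0, by simp, ?_⟩
    rintro t ⟨ht0, ht1⟩
    have h1 : t ^ α ≤ 1 := Real.rpow_le_one ht0 ht1 hα
    have h2 : (1 : ℝ) ≤ ((2 * m * s : ℝ) / n) ^ (2 * α) := by
      apply Real.one_le_rpow _ (by positivity)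
      rw [le_div_iff₀ hn0]
      have : (n : ℝ) < m * s := by exact_mod_cast hlt
      nlinarith
    simp
    nlinarith
  push Not at hlt
  set k := n / (m * s) with hk
  have hk1 : 1 ≤ k := by rw [hk, Nat.one_le_div_iff hms0]; exact hlt
  have hkn : m * s * k ≤ n := Nat.mul_div_le n (m * s)
  have hkn2 : n ≤ 2 * m * s * k := by
    have := Nat.lt_mul_div_succ n hms0
    rw [← hk] at this
    nlinarith
  obtain ⟨K, hKd, hK0, hK⟩ := aux_kernel k hk1
  have hdvd : (X : ℝ[X]) ∣ 1 - K ^ s := by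
    rw [X_dvd_iff, coeff_zero_eq_eval_zero]
    simp [hK0]
  obtain ⟨p, hp⟩ := pow_dvd_pow_of_dvd hdvd m
  refine ⟨p, ?_, ?_⟩
  · by_cases hz : p = 0
    · simp [hz]
    have h1 : ((1 - K ^ s) ^ m).natDegree ≤ n := by
      refine natDegree_pow_le.trans ?_
      have h2 : (1 - K ^ s).natDegree ≤ s * k := by
        refine (natDegree_sub_le _ _).trans ?_
        simp only [natDegree_one, zero_le, sup_of_le_right]
        exact natDegree_pow_le.trans (Nat.mul_le_mul_left s hKd)
      calc m * (1 - K ^ s).natDegree ≤ m * (s * k) := Nat.mul_le_mul_left m h2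
        _ ≤ n := by rw [← mul_assoc]; exact hkn
    rw [hp, natDegree_X_pow_mul m hz] at h1
    omega
  rintro t ht
  obtain ⟨h0, h1, h2⟩ := hK t ht
  obtain ⟨ht0, ht1⟩ := ht
  have he : t ^ m * p.eval t = (1 - K.eval t ^ s) ^ m := by
    have := congrArg (fun q => q.eval t) hp
    simp at this
    exact this.symm
  rw [he]
  set x := K.eval t with hx
  have hu0 : 0 ≤ x ^ s := by positivity
  have hu1 : x ^ s ≤ 1 := pow_le_one₀ h0 h1
  have hb1 : |1 - (1 - x ^ s) ^ m| ≤ m * x ^ s := by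
    have hbern := one_add_mul_le_pow (a := -(x ^ s)) (by linarith) m
    have : (1 - x ^ s) ^ m ≤ 1 := pow_le_one₀ (by linarith) (by linarith)
    rw [abs_of_nonneg (by linarith)]
    rw [← sub_eq_add_neg] at hbern
    linarith
  have hb2 : x ^ s ≤ x ^ α := by
    rcases h0.eq_or_lt with h | h
    · rw [← h, zero_pow (by omega)]; positivity
    · rw [← Real.rpow_natCast]
      exact Real.rpow_le_rpow_of_exponent_ge h h1 hsα
  have hk0 : (0 : ℝ) < k := by exact_mod_cast hk1
  have hb3 : 1 / (k : ℝ) ^ 2 ≤ ((2 * m * s : ℝ) / n) ^ 2 := by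
    rw [← one_div_pow]
    apply pow_le_pow_left₀ (by positivity)
    rw [div_le_div_iff₀ hk0 hn0]
    have : (n : ℝ) ≤ 2 * m * s * k := by exact_mod_cast hkn2
    linarith
  calc t ^ α * |1 - (1 - x ^ s) ^ m| ≤ t ^ α * (m * x ^ α) := by
        apply mul_le_mul_of_nonneg_left _ (by positivity)
        exact hb1.trans (mul_le_mul_of_nonneg_left hb2 (by positivity))
    _ = m * (t * x) ^ α := by rw [Real.mul_rpow ht0 h0]; ring
    _ ≤ m * (((2 * m * s : ℝ) / n) ^ 2) ^ α := by
        apply mul_le_mul_of_nonneg_left _ (by positivity)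
        exact Real.rpow_le_rpow (by positivity) (h2.trans hb3) hα
    _ = m * ((2 * m * s : ℝ) / n) ^ (2 * α) := by
        rw [Real.rpow_mul (by positivity)]; norm_num

open Polynomial in
theorem aux_lower (α : ℝ) (hα : 0 ≤ α) (m : ℕ) (hm : 1 ≤ m) (n : ℕ) (hn : 2 ≤ n)
    (p : Polynomial ℝ) (hp : p.natDegree ≤ n) :
    ∃ t ∈ Set.Icc (0 : ℝ) 1,
      ((1 / 8 : ℝ) ^ α * (1 / (2 * Real.cosh (m + 1)))) * (n : ℝ) ^ (-(2 * α)) ≤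
        t ^ α * |1 - t ^ m * p.eval t| := by
  by_contra! hcon
  have hn0 : (0 : ℝ) < n := by exact_mod_cast (by omega : 0 < n)
  have hn1 : (1 : ℝ) ≤ n := by exact_mod_cast (by omega : 1 ≤ n)
  set D := 2 * Real.cosh (m + 1) with hD
  have hD0 : 0 < D := by have := Real.cosh_pos ((m : ℝ) + 1); positivity
  set y := Real.cosh (1 / n) with hy
  have hyl : 1 + (1 / (n : ℝ)) ^ 2 / 2 ≤ y := by
    have h1 : (1 / (n : ℝ)) / 2 ≤ Real.sinh ((1 / (n : ℝ)) / 2) :=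
      Real.self_le_sinh_iff.2 (by positivity)
    have h2 : y = Real.cosh ((1 / (n : ℝ)) / 2) ^ 2 + Real.sinh ((1 / (n : ℝ)) / 2) ^ 2 := by
      rw [hy, ← Real.cosh_two_mul]; congr 1; ring
    have h3 := Real.cosh_sq ((1 / (n : ℝ)) / 2)
    have h4 : ((1 / (n : ℝ)) / 2) ^ 2 ≤ Real.sinh ((1 / (n : ℝ)) / 2) ^ 2 :=
      pow_le_pow_left₀ (by positivity) h1 2
    linarith [h4, h3, h2, (by ring : ((1 / (n : ℝ)) / 2) ^ 2 = (1 / (n : ℝ)) ^ 2 / 4)]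
  have hyu : y ≤ 3 := by
    have h1 : y ≤ Real.cosh 1 := by
      rw [hy, Real.cosh_le_cosh, abs_of_nonneg (by positivity), abs_one]
      rw [div_le_one hn0]; exact hn1
    have h2 : Real.cosh 1 ≤ 3 := by
      rw [Real.cosh_eq]
      have := Real.exp_one_lt_d9
      have h3 : Real.exp (-1) ≤ 1 := Real.exp_le_one_iff.2 (by norm_num)
      linarith
    linarith
  have hn2 : 0 < (1 / (n : ℝ)) ^ 2 := by positivity
  set a := (y - 1) / (y + 1) with ha
  have hy1 : 0 < y + 1 := by linarith
  have ha0 : 1 / 8 * (1 / (n : ℝ)) ^ 2 ≤ a := by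
    rw [ha, le_div_iff₀ hy1]; nlinarith
  have ha1 : a < 1 := by rw [ha, div_lt_one hy1]; linarith
  have hapos : 0 < a := by nlinarith
  set f : ℝ[X] := 1 - X ^ m * p with hf
  have hfe : ∀ t, f.eval t = 1 - t ^ m * p.eval t := by intro t; simp [hf]
  have hfb : ∀ t ∈ Set.Icc a 1, |f.eval t| ≤ 1 / D := by
    rintro t ⟨hat, ht1⟩
    have h1 := hcon t ⟨by linarith, ht1⟩
    rw [← hfe] at h1
    have h2 : (1 / 8 : ℝ) ^ α * (n : ℝ) ^ (-(2 * α)) ≤ t ^ α := by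
      have : (n : ℝ) ^ (-(2 * α)) = ((1 / (n : ℝ)) ^ 2) ^ α := by
        rw [Real.rpow_neg hn0.le, Real.rpow_mul hn0.le, one_div, inv_pow, Real.inv_rpow (by positivity)]
        norm_num
      rw [this, ← Real.mul_rpow (by norm_num) (by positivity)]
      exact Real.rpow_le_rpow (by positivity) (by linarith) hα
    have htp : 0 < t ^ α := Real.rpow_pos_of_pos (by linarith) _
    have h3 : t ^ α * |f.eval t| ≤ t ^ α * (1 / D) := by
      refine h1.le.trans ?_
      have : 0 ≤ 1 / D := by positivity
      nlinarith
    exact le_of_mul_le_mul_left h3 htp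
  set L : ℝ[X] := C ((1 + a) / 2) - C ((1 - a) / 2) * X with hL
  have hLe : ∀ x, L.eval x = (1 + a) / 2 - (1 - a) / 2 * x := by intro x; simp [hL]
  set P : ℝ[X] := C D * f.comp L with hP
  have hPe : ∀ x, P.eval x = D * f.eval (L.eval x) := by intro x; simp [hP]
  have hLd : L.natDegree ≤ 1 := by rw [hL]; compute_degree
  have hfd : f.natDegree ≤ n + m := by
    rw [hf]
    refine (natDegree_sub_le _ _).trans ?_
    simp only [natDegree_one, zero_le, sup_of_le_right]
    refine natDegree_mul_le.trans ?_
    rw [natDegree_X_pow]; omega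
  have hPd : P.degree ≤ ((n + m : ℕ) : WithBot ℕ) := by
    apply degree_le_of_natDegree_le
    refine (natDegree_C_mul_le _ _).trans (natDegree_comp_le.trans ?_)
    calc f.natDegree * L.natDegree ≤ (n + m) * 1 := Nat.mul_le_mul hfd hLd
      _ = n + m := mul_one _
  have hPb : ∀ x ∈ Set.Icc (-1 : ℝ) 1, |P.eval x| ≤ 1 := by
    rintro x ⟨hx1, hx2⟩
    rw [hPe, abs_mul, abs_of_pos hD0]
    have := hfb (L.eval x) ⟨by rw [hLe]; nlinarith, by rw [hLe]; nlinarith⟩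
    calc D * |f.eval (L.eval x)| ≤ D * (1 / D) := mul_le_mul_of_nonneg_left this hD0.le
      _ = 1 := by field_simp
  have key := Chebyshev.eval_iterate_derivative_le_of_forall_abs_le_one (k := 0) (x := y)
    (Real.one_le_cosh _) hPd hPb
  simp only [Function.iterate_zero, id_eq] at key
  have hLy : L.eval y = 0 := by
    rw [hLe, ha]; field_simp; ring
  rw [hPe, hLy, hfe, zero_pow (by omega), hy, Chebyshev.T_real_cosh] at key
  have hc : Real.cosh (((n + m : ℕ) : ℤ) * (1 / (n : ℝ))) ≤ Real.cosh (m + 1) := by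
    rw [Real.cosh_le_cosh, abs_of_nonneg (by positivity), abs_of_nonneg (by positivity)]
    push_cast
    rw [mul_one_div, div_le_iff₀ hn0]
    have : (0 : ℝ) ≤ m := by positivity
    nlinarith
  have := Real.cosh_pos ((m : ℝ) + 1)
  linarith

theorem stmt_18 (α : ℝ) (hα : 0 ≤ α) (m : ℕ) (hm : 1 ≤ m) :
    ∃ c C : ℝ, 0 < c ∧ ∀ n : ℕ, 2 ≤ n →
      (∀ p : Polynomial ℝ, p.natDegree ≤ n →
        ∃ t ∈ Set.Icc (0 : ℝ) 1,
          c * (n : ℝ) ^ (-(2 * α)) ≤ t ^ α * |1 - t ^ m * p.eval t|) ∧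
      (∃ p : Polynomial ℝ, p.natDegree ≤ n ∧
        ∀ t ∈ Set.Icc (0 : ℝ) 1,
          t ^ α * |1 - t ^ m * p.eval t| ≤ C * (n : ℝ) ^ (-(2 * α))) := by
  obtain ⟨s, hs⟩ := exists_nat_ge α
  refine ⟨_, _, ?_, fun n hn => ⟨fun p hp => aux_lower α hα m hm n hn p hp,
    aux_upper α hα m hm (s + 1) (by omega) (by push_cast; linarith) n hn⟩⟩
  have := Real.cosh_pos ((m : ℝ) + 1)
  positivity
end

section
/- Let λ ∈ (0,1), r ∈ (0,2), p ∈ [1,∞), and d ≥ 1. For the ball K_r = {x ∈ ℝ^d : |x| ≤ r} and any polynomial q of degree ≤ 2n with integer coefficients, (∫_{K_r} |λ − q(x)|^p dx)^{1/p} ≥ c(λ, d, p, r) · n^{−d/p} for some positive constant c(λ, d, p, r) independent of n and q. -/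
open MeasureTheory

lemma aux_parseval (Q : Polynomial ℂ) (m : ℕ) (hm : Q.natDegree ≤ m) (z : ℂ) (hz : ‖z‖ = 1) :
    ‖Q.eval z‖ ^ 2 ≤ (m + 1) * ((2 * Real.pi)⁻¹ * ∫ θ in (0:ℝ)..(2 * Real.pi),
      ‖Q.eval (circleMap 0 1 θ)‖ ^ 2) := by
  have h1 := Q.sum_sq_norm_coeff_eq_circleAverage
  rw [Real.circleAverage_def, smul_eq_mul] at h1
  rw [← h1]
  have h2 : ‖Q.eval z‖ ≤ ∑ i ∈ Q.support, ‖Q.coeff i‖ := by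
    rw [Polynomial.eval_eq_sum, Polynomial.sum]
    refine (norm_sum_le _ _).trans (Finset.sum_le_sum fun i _ => ?_)
    simp [hz]
  have h3 : (Q.support.card : ℝ) ≤ m + 1 := by
    exact_mod_cast Q.card_supp_le_succ_natDegree.trans (by omega)
  calc ‖Q.eval z‖ ^ 2 ≤ (∑ i ∈ Q.support, ‖Q.coeff i‖) ^ 2 := by gcongr
    _ ≤ Q.support.card * ∑ i ∈ Q.support, ‖Q.coeff i‖ ^ 2 := sq_sum_le_card_mul_sum_sq
    _ ≤ _ := by gcongr

lemma aux_trig (P : Polynomial ℝ) (N : ℕ) (hP : P.natDegree ≤ N) :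
    ∃ Q : Polynomial ℂ, Q.natDegree ≤ 2 * N + 2 ∧
      ∀ θ : ℝ, ‖Q.eval (circleMap 0 1 θ)‖ = |P.eval (Real.sin θ)| * |Real.cos θ| := by
  refine ⟨(∑ j ∈ Finset.range (N + 1), Polynomial.C (P.coeff j : ℂ) *
      (Polynomial.C (1 / (2 * Complex.I)) * (Polynomial.X ^ 2 - 1)) ^ j * Polynomial.X ^ (N - j)) *
      (Polynomial.C (1 / 2) * (Polynomial.X ^ 2 + 1)), ?_, ?_⟩
  · refine Polynomial.natDegree_mul_le.trans (add_le_add ?_ ?_)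
    · refine Polynomial.natDegree_sum_le_of_forall_le _ _ fun j hj => ?_
      have hj' : j ≤ N := by simpa [Nat.lt_succ_iff] using hj
      have e1 : (Polynomial.C (1 / (2 * Complex.I)) * (Polynomial.X ^ 2 - 1) :
          Polynomial ℂ).natDegree ≤ 2 := by compute_degree
      have e2 := Polynomial.natDegree_pow_le_of_le j e1
      have e3 : (Polynomial.X ^ (N - j) : Polynomial ℂ).natDegree ≤ N - j :=
        Polynomial.natDegree_X_pow_le _
      have e4 := Polynomial.natDegree_C_mul_le (P.coeff j : ℂ)
        ((Polynomial.C (1 / (2 * Complex.I)) * (Polynomial.X ^ 2 - 1)) ^ j)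
      refine Polynomial.natDegree_mul_le.trans ?_
      omega
    · compute_degree
  · intro θ
    set z := circleMap 0 1 θ with hz
    have hz1 : ‖z‖ = 1 := by simp [hz]
    have hze : z = Real.cos θ + Real.sin θ * Complex.I := by
      simp [hz, circleMap, Complex.exp_mul_I]
    have hsq : (Real.cos θ : ℂ) ^ 2 + (Real.sin θ : ℂ) ^ 2 = 1 := by
      exact_mod_cast Real.cos_sq_add_sin_sq θ
    have k1 : 1 / (2 * Complex.I) * (z ^ 2 - 1) = z * Real.sin θ := by
      field_simp
      rw [hze]
      linear_combination hsq + (2 * (Real.sin θ : ℂ)^2 - (Real.sin θ : ℂ)^2 - 2 * (Real.sin θ : ℂ)^2) * (Complex.I_sq) 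
    have k2 : (1 / 2 : ℂ) * (z ^ 2 + 1) = z * Real.cos θ := by
      rw [hze]
      linear_combination (-1/2) * hsq + (1/2) * (Real.sin θ : ℂ)^2 * (Complex.I_sq)
    have k3 : ((P.eval (Real.sin θ) : ℝ) : ℂ) = ∑ j ∈ Finset.range (N + 1), (P.coeff j : ℂ) * (Real.sin θ : ℂ) ^ j := by
      rw [Polynomial.eval_eq_sum_range' (Nat.lt_succ_of_le hP)]
      push_cast; rfl
    have k4 : Polynomial.eval z ((∑ j ∈ Finset.range (N + 1), Polynomial.C (P.coeff j : ℂ) *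
      (Polynomial.C (1 / (2 * Complex.I)) * (Polynomial.X ^ 2 - 1)) ^ j * Polynomial.X ^ (N - j)) *
      (Polynomial.C (1 / 2) * (Polynomial.X ^ 2 + 1))) = z ^ N * ((P.eval (Real.sin θ) : ℝ) : ℂ) * (z * Real.cos θ) := by
      rw [k3, ← k2]
      simp only [Polynomial.eval_mul, Polynomial.eval_finsetSum, Polynomial.eval_C, Polynomial.eval_pow,
        Polynomial.eval_sub, Polynomial.eval_add, Polynomial.eval_X, Polynomial.eval_one, k1]
      congr 1
      rw [Finset.mul_sum]
      refine Finset.sum_congr rfl fun j hj => ?_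
      have hj' : j ≤ N := by simpa [Nat.lt_succ_iff] using hj
      rw [mul_pow]
      rw [← pow_mul_pow_sub z hj']; ring
    rw [k4]
    simp only [norm_mul, norm_pow, hz1, one_pow, one_mul, Complex.norm_real, Real.norm_eq_abs]

lemma aux_subst (φ : ℝ → ℝ) (hφ : Continuous φ) :
    ∫ θ in (0:ℝ)..(2 * Real.pi), φ (Real.sin θ) * |Real.cos θ| = 2 * ∫ t in (-1:ℝ)..1, φ t := by
  have key : ∀ a b : ℝ, ∫ θ in a..b, φ (Real.sin θ) * Real.cos θ
      = ∫ t in Real.sin a..Real.sin b, φ t := fun a b =>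
    intervalIntegral.integral_comp_mul_deriv (f := Real.sin) (f' := Real.cos) (g := φ)
      (fun x _ => Real.hasDerivAt_sin x) Real.continuous_cos.continuousOn hφ
  have ii : ∀ a b : ℝ, IntervalIntegrable (fun θ => φ (Real.sin θ) * |Real.cos θ|) volume a b :=
    fun a b => (by fun_prop : Continuous fun θ => φ (Real.sin θ) * |Real.cos θ|).intervalIntegrable _ _
  have pp := Real.pi_pos
  rw [← intervalIntegral.integral_add_adjacent_intervals (ii 0 (Real.pi / 2)) (ii _ _),
    ← intervalIntegral.integral_add_adjacent_intervals (ii (Real.pi / 2) (3 * Real.pi / 2)) (ii _ _)]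
  have s3 : Real.sin (3 * Real.pi / 2) = -1 := by
    rw [show 3 * Real.pi / 2 = Real.pi / 2 + Real.pi by ring, Real.sin_add_pi]; simp
  have i1 : ∫ θ in (0:ℝ)..(Real.pi / 2), φ (Real.sin θ) * |Real.cos θ| = ∫ t in (0:ℝ)..1, φ t := by
    have := key 0 (Real.pi / 2)
    rw [Real.sin_zero, Real.sin_pi_div_two] at this
    rw [← this]
    refine intervalIntegral.integral_congr fun x hx => ?_
    rw [Set.uIcc_of_le (by positivity)] at hx
    rw [abs_of_nonneg (Real.cos_nonneg_of_neg_pi_div_two_le_of_le (by linarith [hx.1]) hx.2)]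
  have i2 : ∫ θ in (Real.pi / 2)..(3 * Real.pi / 2), φ (Real.sin θ) * |Real.cos θ|
      = ∫ t in (-1:ℝ)..1, φ t := by
    have := key (Real.pi / 2) (3 * Real.pi / 2)
    rw [s3, Real.sin_pi_div_two] at this
    rw [intervalIntegral.integral_symm, ← neg_neg (∫ t in (-1:ℝ)..1, φ t), ← intervalIntegral.integral_symm (-1) 1, ← this,
      ← intervalIntegral.integral_symm, ← intervalIntegral.integral_neg]
    refine intervalIntegral.integral_congr fun x hx => ?_
    rw [Set.uIcc_of_le (by linarith)] at hx
    rw [abs_of_nonpos (Real.cos_nonpos_of_pi_div_two_le_of_le hx.1 (by linarith [hx.2]))]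
    ring
  have i3 : ∫ θ in (3 * Real.pi / 2)..(2 * Real.pi), φ (Real.sin θ) * |Real.cos θ|
      = ∫ t in (-1:ℝ)..0, φ t := by
    have := key (3 * Real.pi / 2) (2 * Real.pi)
    rw [s3, Real.sin_two_pi] at this
    rw [← this]
    refine intervalIntegral.integral_congr fun x hx => ?_
    rw [Set.uIcc_of_le (by linarith)] at hx
    rw [abs_of_nonneg]
    rw [← Real.cos_sub_two_pi]
    exact Real.cos_nonneg_of_neg_pi_div_two_le_of_le (by linarith [hx.1]) (by linarith [hx.2])
  rw [i1, i2, i3]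
  have jj := fun a b => hφ.intervalIntegrable (μ := volume) a b
  rw [← intervalIntegral.integral_add_adjacent_intervals (jj (-1) 0) (jj 0 1)]
  ring

lemma aux_one (p : ℝ) (hp : 1 ≤ p) : ∃ C : ℝ, 0 < C ∧ ∀ N : ℕ, 1 ≤ N → ∀ P : Polynomial ℝ,
    P.natDegree ≤ N → |P.eval 0| ^ p ≤ C * N * ∫ t in (-1:ℝ)..1, |P.eval t| ^ p := by
  obtain ⟨k, hk⟩ := exists_nat_ge p
  refine ⟨4 * k + 1, by positivity, fun N hN P hP => ?_⟩
  have hp0 : 0 < p := by linarith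
  obtain ⟨Q, hQd, hQ⟩ := aux_trig P N hP
  set G : ℝ → ℝ := fun θ => |P.eval (Real.sin θ)| * |Real.cos θ| with hG
  have hGc : Continuous G := by fun_prop
  have hG0 : ∀ θ, 0 ≤ G θ := fun θ => by positivity
  obtain ⟨z0, hz0, hmax⟩ := (isCompact_sphere (0:ℂ) 1).exists_isMaxOn
    (NormedSpace.sphere_nonempty.2 zero_le_one) (f := fun z => ‖Q.eval z‖) (by fun_prop)
  have hz01 : ‖z0‖ = 1 := by simpa using hz0
  set M := ‖Q.eval z0‖ with hM
  have hGM : ∀ θ, G θ ≤ M := fun θ => by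
    have := hmax (a := circleMap 0 1 θ) (by simp)
    simpa [hQ] using this
  have h0 : |P.eval 0| ≤ M := by simpa [hG] using hGM 0
  have hint0 : 0 ≤ ∫ t in (-1:ℝ)..1, |P.eval t| ^ p :=
    intervalIntegral.integral_nonneg (by norm_num) fun t _ => by positivity
  rcases (norm_nonneg (Q.eval z0)).eq_or_lt with hM0 | hM0
  · have : |P.eval 0| = 0 := le_antisymm (h0.trans hM0.ge) (abs_nonneg _)
    rw [this, Real.zero_rpow hp0.ne']
    positivity
  have hM0 : 0 < M := hM0
  have h1 := aux_parseval (Q ^ k) (k * (2 * N + 2)) (Polynomial.natDegree_pow_le_of_le k hQd) z0 hz01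
  simp only [Polynomial.eval_pow, norm_pow, hQ, ← pow_mul] at h1
  rw [← hM] at h1
  have hGi : ∀ θ, G θ ^ (k * 2) ≤ M ^ ((k * 2 : ℝ) - p) * (|P.eval (Real.sin θ)| ^ p * |Real.cos θ|) := by
    intro θ
    have hc : |Real.cos θ| ≤ 1 := Real.abs_cos_le_one θ
    have e1 : G θ ^ p ≤ |P.eval (Real.sin θ)| ^ p * |Real.cos θ| := by
      rw [hG]; simp only
      rw [Real.mul_rpow (abs_nonneg _) (abs_nonneg _)]
      gcongr
      calc |Real.cos θ| ^ p ≤ |Real.cos θ| ^ (1:ℝ) :=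
            Real.rpow_le_rpow_of_exponent_ge' (abs_nonneg _) hc zero_le_one hp
        _ = _ := Real.rpow_one _
    have hk2 : (0:ℝ) < k * 2 := by linarith
    calc G θ ^ (k * 2) = G θ ^ ((k * 2 : ℝ) - p) * G θ ^ p := by
          rw [← Real.rpow_add' (hG0 θ) (by rw [sub_add_cancel]; exact hk2.ne'), ← Real.rpow_natCast]
          push_cast; ring_nf
      _ ≤ _ := by
          gcongr
          · linarith
          · exact hGM θ
  have h2 : ∫ θ in (0:ℝ)..(2 * Real.pi), G θ ^ (k * 2) ≤
      M ^ ((k * 2 : ℝ) - p) * (2 * ∫ t in (-1:ℝ)..1, |P.eval t| ^ p) := by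
    have hφ : Continuous fun t => |P.eval t| ^ p :=
      Continuous.rpow_const (by fun_prop) fun _ => Or.inr hp0.le
    rw [← aux_subst (fun t => |P.eval t| ^ p) hφ, ← intervalIntegral.integral_const_mul]
    refine intervalIntegral.integral_mono_on (by positivity) ?_ ?_ fun θ _ => hGi θ
    · exact (by fun_prop : Continuous fun θ => G θ ^ (k * 2)).intervalIntegrable _ _
    · have := hφ.comp Real.continuous_sin
      simp only [Function.comp_def] at this
      exact (by fun_prop : Continuous fun θ => M ^ ((k * 2 : ℝ) - p) * (|P.eval (Real.sin θ)| ^ p * |Real.cos θ|)).intervalIntegrable _ _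
  set J := ∫ t in (-1:ℝ)..1, |P.eval t| ^ p with hJ
  have h3 : M ^ (k * 2) ≤ ((k * (2 * N + 2) : ℕ) + 1) * ((2 * Real.pi)⁻¹ * (M ^ ((k * 2 : ℝ) - p) * (2 * J))) := by
    refine h1.trans ?_
    gcongr
  have h4 : M ^ (k * 2) = M ^ ((k * 2 : ℝ) - p) * M ^ p := by
    rw [← Real.rpow_add hM0, ← Real.rpow_natCast]
    push_cast; ring_nf
  have hMp : 0 < M ^ ((k * 2 : ℝ) - p) := Real.rpow_pos_of_pos hM0 _
  have h5 : M ^ p ≤ ((k * (2 * N + 2) : ℕ) + 1) * (Real.pi⁻¹ * J) := by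
    rw [h4] at h3
    refine le_of_mul_le_mul_left (h3.trans (le_of_eq ?_)) hMp
    field_simp
  have hpi : Real.pi⁻¹ ≤ 1 := inv_le_one_of_one_le₀ (by linarith [Real.pi_gt_three])
  have hN' : (1:ℝ) ≤ N := by exact_mod_cast hN
  calc |P.eval 0| ^ p ≤ M ^ p := by gcongr
    _ ≤ _ := h5
    _ ≤ ((k * (2 * N + 2) : ℕ) + 1) * (1 * J) := by gcongr
    _ ≤ (4 * k + 1) * N * J := by
      rw [one_mul]
      gcongr
      push_cast
      nlinarith [(Nat.cast_nonneg k : (0:ℝ) ≤ k)]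

lemma aux_scale (p : ℝ) (hp : 1 ≤ p) (a : ℝ) (ha : 0 < a) : ∃ C : ℝ, 0 < C ∧ ∀ N : ℕ, 1 ≤ N →
    ∀ P : Polynomial ℝ, P.natDegree ≤ N → 
    ENNReal.ofReal (|P.eval 0| ^ p) ≤ ENNReal.ofReal (C * N) *
      ∫⁻ t in Set.Icc (-a) a, ENNReal.ofReal (|P.eval t| ^ p) := by
  obtain ⟨C, hC, h⟩ := aux_one p hp
  refine ⟨C * a⁻¹, by positivity, fun N hN P hP => ?_⟩
  have h1 := h N hN (P.comp (Polynomial.C a * Polynomial.X)) (by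
    refine Polynomial.natDegree_comp_le.trans ?_
    have : (Polynomial.C a * Polynomial.X).natDegree ≤ 1 := by compute_degree
    nlinarith)
  simp only [Polynomial.eval_comp, Polynomial.eval_mul, Polynomial.eval_C, Polynomial.eval_X, mul_zero] at h1
  rw [intervalIntegral.integral_comp_mul_left (fun t => |P.eval t| ^ p) ha.ne'] at h1
  have hφ : Continuous fun t => |P.eval t| ^ p :=
      Continuous.rpow_const (by fun_prop) fun _ => Or.inr (by linarith)
  rw [← ofReal_integral_eq_lintegral_ofReal, ← ENNReal.ofReal_mul (by positivity)]
  · refine ENNReal.ofReal_le_ofReal (h1.trans (le_of_eq ?_))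
    rw [intervalIntegral.integral_of_le (by linarith), ← integral_Icc_eq_integral_Ioc]
    simp only [smul_eq_mul, mul_neg, mul_one]; ring
  · exact hφ.continuousOn.integrableOn_Icc
  · exact Filter.Eventually.of_forall fun t => by positivity
  
lemma aux_multi (p : ℝ) (hp : 1 ≤ p) (a : ℝ) (N : ℕ) (K : ENNReal) 
    (hK : ∀ P : Polynomial ℝ, P.natDegree ≤ N → 
      ENNReal.ofReal (|P.eval 0| ^ p) ≤ K * ∫⁻ t in Set.Icc (-a) a, ENNReal.ofReal (|P.eval t| ^ p)) :
    ∀ (d : ℕ) (f : (Fin d → ℝ) → ℝ), Continuous f → 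
      (∀ x i, ∃ P : Polynomial ℝ, P.natDegree ≤ N ∧ ∀ t, f (Function.update x i t) = P.eval t) →
      ENNReal.ofReal (|f 0| ^ p) ≤ K ^ d * ∫⁻ x, ENNReal.ofReal (|f x| ^ p)
        ∂(Measure.pi fun _ : Fin d => volume.restrict (Set.Icc (-a) a)) := by
  intro d
  induction d with
  | zero =>
    intro f hf _
    rw [Measure.pi_of_empty _ 0]
    simp
  | succ d ih =>
    intro f hf hpoly
    have hmp := (measurePreserving_piFinSuccAbove
      (fun _ : Fin (d+1) => (volume.restrict (Set.Icc (-a) a) : Measure ℝ)) 0).symm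
    have hmf : Measurable fun x => ENNReal.ofReal (|f x| ^ p) := by
      have := hf.measurable; fun_prop
    rw [← hmp.lintegral_comp hmf]
    have hmf2 := hmf.comp (MeasurableEquiv.piFinSuccAbove (fun _ : Fin (d+1) => ℝ) 0).symm.measurable
    simp only [Function.comp_def] at hmf2
    rw [lintegral_prod_symm' _ hmf2]
    have hcons : ∀ (t : ℝ) (y : Fin d → ℝ), (MeasurableEquiv.piFinSuccAbove (fun _ : Fin (d+1) => ℝ) 0).symm (t, y) = Fin.cons t y := by
      intro t y
      simp [MeasurableEquiv.piFinSuccAbove_symm_apply, Fin.insertNthEquiv]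
    simp only [hcons]
    have hg := ih (fun y => f (Fin.cons 0 y)) (hf.comp (by fun_prop)) (by
      intro y i
      obtain ⟨P, hP, h⟩ := hpoly (Fin.cons 0 y) i.succ
      refine ⟨P, hP, fun t => ?_⟩
      rw [← h t, Fin.cons_update])
    have h00 : (Fin.cons 0 0 : Fin (d+1) → ℝ) = 0 := by
      ext i; refine Fin.cases ?_ (fun j => ?_) i <;> simp
    simp only [h00] at hg
    refine hg.trans ?_
    rw [pow_succ, mul_assoc]
    gcongr
    rw [← lintegral_const_mul]
    · refine lintegral_mono fun y => ?_
      obtain ⟨P, hP, h⟩ := hpoly (Fin.cons 0 y) 0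
      simp only [Fin.update_cons_zero] at h
      simp only [h]
      exact hK P hP
    · refine Measurable.lintegral_prod_left' (f := fun z : ℝ × (Fin d → ℝ) => ENNReal.ofReal (|f (Fin.cons z.1 z.2)| ^ p)) ?_
      have := hmf.comp (MeasurableEquiv.piFinSuccAbove (fun _ : Fin (d+1) => ℝ) 0).symm.measurable
      convert this using 2 with z
      rw [← hcons]; rfl

theorem stmt_19 (lam : ℝ) (hlam : lam ∈ Set.Ioo (0 : ℝ) 1)
    (r : ℝ) (hr : r ∈ Set.Ioo (0 : ℝ) 2)
    (p : ℝ) (hp : 1 ≤ p) (d : ℕ) (hd : 1 ≤ d) :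
    ∃ c : ℝ, 0 < c ∧ ∀ n : ℕ, 1 ≤ n → ∀ q : MvPolynomial (Fin d) ℤ,
      q.totalDegree ≤ 2 * n →
        c * (n : ℝ) ^ (-(d : ℝ) / p) ≤
          (∫ x in Metric.closedBall (0 : EuclideanSpace ℝ (Fin d)) r,
            |lam - MvPolynomial.eval (fun i => x i) (q.map (Int.castRingHom ℝ))| ^ p) ^ (1 / p) := by
  have hr0 : 0 < r := hr.1
  have hp0 : 0 < p := by linarith
  have hd0 : (1:ℝ) ≤ d := by exact_mod_cast hd
  set a : ℝ := r / d with ha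
  have ha0 : 0 < a := by positivity
  obtain ⟨C, hC, h1⟩ := aux_scale p hp a ha0
  set δ := min lam (1 - lam) with hδ
  have hδ0 : 0 < δ := lt_min hlam.1 (by linarith [hlam.2])
  refine ⟨δ * ((C * 2) ^ d)⁻¹ ^ (1 / p), by positivity, fun n hn q hq => ?_⟩
  have hn0 : (1:ℝ) ≤ n := by exact_mod_cast hn
  set Q := q.map (Int.castRingHom ℝ) with hQ
  have hQd : Q.totalDegree ≤ 2 * n := by
    refine le_trans ?_ hq
    exact Finset.sup_mono (MvPolynomial.support_map_subset _ _)
  set f : (Fin d → ℝ) → ℝ := fun x => lam - MvPolynomial.eval x Q with hf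
  have hfc : Continuous f := continuous_const.sub (MvPolynomial.continuous_eval Q)
  have hf0 : δ ≤ |f 0| := by
    have e : f 0 = lam - ((MvPolynomial.constantCoeff q : ℤ) : ℝ) := by
      simp [hf, hQ, MvPolynomial.eval_zero, MvPolynomial.constantCoeff_map]
    rw [e]
    set m := MvPolynomial.constantCoeff q
    rcases le_or_gt m 0 with hm | hm
    · have : (m:ℝ) ≤ 0 := by exact_mod_cast hm
      have h6 := le_abs_self (lam - (m:ℝ))
      exact (min_le_left _ _).trans (by linarith)
    · have : (1:ℝ) ≤ m := by exact_mod_cast hm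
      have h6 := neg_le_abs (lam - (m:ℝ))
      exact (min_le_right _ _).trans (by linarith)
  have h2 := aux_multi p hp a (2 * n) _ (h1 (2 * n) (by omega)) d f hfc (by
    intro x i
    refine ⟨Polynomial.C lam - MvPolynomial.aeval
      (fun j => if j = i then Polynomial.X else Polynomial.C (x j)) Q, ?_, fun t => ?_⟩
    · refine (Polynomial.natDegree_sub_le _ _).trans (max_le (by simp) ?_)
      refine (MvPolynomial.aeval_natDegree_le Q hQd _ (n := 1) fun j => ?_).trans (by omega)
      split_ifs <;> simp
    · rw [Polynomial.eval_sub, Polynomial.eval_C]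
      simp only [hf]
      congr 1
      rw [← Polynomial.coe_aeval_eq_eval, ← AlgHom.comp_apply, MvPolynomial.comp_aeval,
        ← MvPolynomial.coe_aeval_eq_eval]
      simp only [RingHom.coe_coe]
      congr 2
      ext j
      by_cases hj : j = i
      · subst hj; simp
      · simp [hj])
  have hgc : Continuous fun x => |f x| ^ p :=
    Continuous.rpow_const (by fun_prop) fun _ => Or.inr hp0.le
  rw [← Measure.restrict_pi_pi] at h2
  set S : Set (Fin d → ℝ) := Set.univ.pi fun _ => Set.Icc (-a) a with hS
  have hScomp : IsCompact S := isCompact_univ_pi fun _ => isCompact_Icc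
  rw [← volume_pi] at h2
  rw [← ofReal_integral_eq_lintegral_ofReal (hgc.continuousOn.integrableOn_compact hScomp)
    (Filter.Eventually.of_forall fun t => by positivity),
    ← ENNReal.ofReal_pow (by positivity), ← ENNReal.ofReal_mul (by positivity),
    ENNReal.ofReal_le_ofReal_iff (mul_nonneg (by positivity)
      (integral_nonneg fun t => by positivity))] at h2
  have hemb : MeasurableEmbedding (@WithLp.toLp 2 (Fin d → ℝ)) :=
    (MeasurableEquiv.toLp 2 (Fin d → ℝ)).measurableEmbedding
  have h3 := (PiLp.volume_preserving_toLp (Fin d)).setIntegral_preimage_emb hemb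
    (fun x : EuclideanSpace ℝ (Fin d) => |lam - MvPolynomial.eval (fun i => x i) Q| ^ p)
    (Metric.closedBall 0 r)
  rw [← h3]
  set B := (@WithLp.toLp 2 (Fin d → ℝ)) ⁻¹' (Metric.closedBall 0 r) with hB
  have hSB : S ⊆ B := by
    intro x hx
    simp only [hB, Set.mem_preimage, mem_closedBall_zero_iff]
    rw [EuclideanSpace.norm_eq]
    refine Real.sqrt_le_iff.2 ⟨hr0.le, ?_⟩
    calc ∑ i, ‖x i‖ ^ 2 ≤ ∑ i : Fin d, a ^ 2 := by
          refine Finset.sum_le_sum fun i _ => ?_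
          have := hx i (Set.mem_univ i)
          rw [Real.norm_eq_abs]
          have := abs_le.2 this
          gcongr
      _ = d * a ^ 2 := by simp
      _ ≤ r ^ 2 := by
          have : r = d * a := by rw [ha]; field_simp
          rw [this]
          nlinarith [sq_nonneg a, mul_nonneg (sub_nonneg.2 hd0) (mul_nonneg (by linarith : (0:ℝ) ≤ d) (sq_nonneg a))]
  have hBcomp : IsCompact B :=
    (PiLp.homeomorph 2 (fun _ : Fin d => ℝ)).symm.isCompact_preimage.2 (isCompact_closedBall _ _)
  have h4 : ∫ x in S, |f x| ^ p ≤ ∫ x in B, |f x| ^ p :=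
    setIntegral_mono_set (hgc.continuousOn.integrableOn_compact hBcomp)
      (Filter.Eventually.of_forall fun t => by positivity) hSB.eventuallyLE
  change _ ≤ (∫ x in B, |f x| ^ p) ^ (1 / p)
  have h5 : δ ^ p * (((C * 2) ^ d)⁻¹ * ((n:ℝ) ^ d)⁻¹) ≤ ∫ x in B, |f x| ^ p := by
    refine le_trans ?_ h4
    rw [← mul_inv, ← div_eq_mul_inv, div_le_iff₀ (by positivity), ← mul_pow]
    calc δ ^ p ≤ |f 0| ^ p := by gcongr
      _ ≤ _ := h2
      _ = _ := by push_cast; ring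
  refine le_trans (le_of_eq ?_) (Real.rpow_le_rpow (by positivity) h5 (by positivity))
  rw [Real.mul_rpow (by positivity) (by positivity), Real.mul_rpow (by positivity) (by positivity),
    ← Real.rpow_mul hδ0.le, mul_one_div_cancel hp0.ne', Real.rpow_one, mul_assoc]
  congr 2
  rw [← Real.rpow_natCast, ← Real.rpow_neg (by positivity), ← Real.rpow_mul (by positivity)]
  congr 1
  ring
end
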